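/- Let X be a metric space with a Borel probability measure λ, let (x_j)_{j∈J} be a finite family of points of X, and let C > 0, R > 0, r > 0 and δ with 0 < δ < r/2. Write N_η(A) for the open η-neighborhood of A and N_{−η}(A) for the complement of N_η(X \ A), and for B ⊆ X put Ft(B) = #{j ∈ J : x_j ∈ B}. Assume: (i) (equidistribution) for every B ⊆ X, (1−δ)·λ(N_{−δ}(B)) ≤ Ft(B)/C ≤ (1+δ)·λ(N_δ(B)); (ii) (expansion) for every A ⊆ X and every η > 0, if λ(N_η(A)) ≤ 1/2 then λ(N_η(A)) ≥ (1 + η/R)·λ(A); (iii) (arithmetic) 1/(1 + (r/2 − δ)·(1/R)) ≤ (1 − δ)/(1 + δ). Let ρ : X → X be a bijective isometry with ρ_*λ = λ. Then for every B ⊆ X, Ft(B) ≤ Ft(ρ(N_r(B))). -/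

import Mathlib

open MeasureTheory

/-- The open `η`-neighborhood of a set `A` in a metric space:
the union of the open balls of radius `η` centered at points of `A`. -/
def nbhd {X : Type*} [MetricSpace X] (η : ℝ) (A : Set X) : Set X :=
  ⋃ a ∈ A, Metric.ball a η

theorem mem_nbhd_iff {X : Type*} [MetricSpace X] {η : ℝ} {A : Set X} {y : X} :
    y ∈ nbhd η A ↔ ∃ a ∈ A, dist y a < η := by
  simp [nbhd]

theorem card_mono_aux {X : Type*} {J : Type*} [Fintype J] (x : J → X) {A B : Set X}
    (h : A ⊆ B) : (Nat.card {j : J // x j ∈ A} : ℝ) ≤ (Nat.card {j : J // x j ∈ B} : ℝ) := by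
  have := Nat.card_le_card_of_injective
    (fun j : {j : J // x j ∈ A} => (⟨j.1, h j.2⟩ : {j : J // x j ∈ B}))
    (fun a b hab => Subtype.ext (by simpa using hab))
  exact_mod_cast this

theorem card_compl_aux {X : Type*} {J : Type*} [Fintype J] (x : J → X) (A : Set X) :
    (Nat.card {j : J // x j ∈ A} : ℝ) + (Nat.card {j : J // x j ∈ Aᶜ} : ℝ) = Nat.card J := by
  classical
  have h := Nat.card_congr (Equiv.sumCompl (fun j : J => x j ∈ A))
  rw [Nat.card_sum] at h
  exact_mod_cast h

theorem case_small {X : Type*} [MetricSpace X] [MeasurableSpace X]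
    (lam : Measure X) [IsProbabilityMeasure lam]
    {J : Type*} [Fintype J] (x : J → X)
    (C R r δ : ℝ) (hC : 0 < C) (hR : 0 < R)
    (hδ0 : 0 < δ) (hδ : δ < r / 2)
    (hequi : ∀ B : Set X,
      (1 - δ) * (lam ((nbhd δ Bᶜ)ᶜ)).toReal ≤ (Nat.card {j : J // x j ∈ B} : ℝ) / C ∧
      (Nat.card {j : J // x j ∈ B} : ℝ) / C ≤ (1 + δ) * (lam (nbhd δ B)).toReal)
    (hexp : ∀ (A : Set X) (η : ℝ), 0 < η → (lam (nbhd η A)).toReal ≤ 1 / 2 →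
      (1 + η / R) * (lam A).toReal ≤ (lam (nbhd η A)).toReal)
    (harith : 1 / (1 + (r / 2 - δ) * (1 / R)) ≤ (1 - δ) / (1 + δ))
    (f : X → X) (hf : Isometry f) (hfm : ∀ S, lam (f ⁻¹' S) = lam S)
    (B : Set X) (hB : (lam (nbhd (r / 2) B)).toReal ≤ 1 / 2) :
    (Nat.card {j : J // x j ∈ B} : ℝ) ≤ (Nat.card {j : J // x j ∈ f ⁻¹' nbhd r B} : ℝ) := by
  have hη : 0 < r / 2 - δ := by linarith
  have hsub : nbhd (r / 2 - δ) (nbhd δ B) ⊆ nbhd (r / 2) B := by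
    intro y hy
    obtain ⟨a, ha, hya⟩ := mem_nbhd_iff.1 hy
    obtain ⟨b, hb, hab⟩ := mem_nbhd_iff.1 ha
    exact mem_nbhd_iff.2 ⟨b, hb, by linarith [dist_triangle y a b]⟩
  have hmono : ∀ S T : Set X, S ⊆ T → (lam S).toReal ≤ (lam T).toReal := fun S T h =>
    ENNReal.toReal_mono (measure_ne_top _ _) (measure_mono h)
  have h1 := hmono _ _ hsub
  have h2 := hexp (nbhd δ B) _ hη (h1.trans hB)
  have hsub2 : f ⁻¹' nbhd (r / 2) B ⊆ (nbhd δ (f ⁻¹' nbhd r B)ᶜ)ᶜ := by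
    intro y hy hy'
    obtain ⟨a, ha, hya⟩ := mem_nbhd_iff.1 hy'
    obtain ⟨b, hb, hab⟩ := mem_nbhd_iff.1 (show f y ∈ nbhd (r / 2) B from hy)
    apply ha
    refine mem_nbhd_iff.2 ⟨b, hb, ?_⟩
    have := hf.dist_eq y a
    linarith [dist_triangle (f a) (f y) b, dist_comm (f a) (f y)]
  have h3 := hmono _ _ hsub2
  rw [hfm] at h3
  have hk : 0 < 1 + (r / 2 - δ) * (1 / R) := by positivity
  have hδ1 : 0 < 1 + δ := by linarith
  rw [div_le_div_iff₀ hk hδ1] at harith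
  have hk' : (1 + (r / 2 - δ) / R) = 1 + (r / 2 - δ) * (1 / R) := by ring
  rw [hk'] at h2
  set k := 1 + (r / 2 - δ) * (1 / R)
  have hpos : 0 ≤ 1 - δ := by
    by_contra hneg
    have : (1 - δ) * k < 0 := mul_neg_of_neg_of_pos (by linarith) hk
    linarith
  have hfin : (Nat.card {j : J // x j ∈ B} : ℝ) / C
      ≤ (Nat.card {j : J // x j ∈ f ⁻¹' nbhd r B} : ℝ) / C := by
    calc _ ≤ (1 + δ) * (lam (nbhd δ B)).toReal := (hequi B).2
      _ ≤ ((1 - δ) * k) * (lam (nbhd δ B)).toReal :=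
          mul_le_mul_of_nonneg_right (by linarith) ENNReal.toReal_nonneg
      _ = (1 - δ) * (k * (lam (nbhd δ B)).toReal) := by ring
      _ ≤ (1 - δ) * (lam ((nbhd δ (f ⁻¹' nbhd r B)ᶜ)ᶜ)).toReal :=
          mul_le_mul_of_nonneg_left (h2.trans (h1.trans h3)) hpos
      _ ≤ _ := (hequi _).1
  exact (div_le_div_iff_of_pos_right hC).1 hfin

/-- Abstract matching lemma: given the equidistribution of the points `x j` at scale `δ`,
the Cheeger-type expansion property, and the arithmetic inequality, for any
measure-preserving bijective isometry `ρ` and any `B ⊆ X`, the number of points in `B`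
is at most the number of points in `ρ(N_r(B))`. -/
theorem stmt7 {X : Type*} [MetricSpace X] [MeasurableSpace X] [BorelSpace X]
    (lam : Measure X) [IsProbabilityMeasure lam]
    {J : Type*} [Fintype J] (x : J → X)
    (C R r δ : ℝ) (hC : 0 < C) (hR : 0 < R) (hr : 0 < r)
    (hδ0 : 0 < δ) (hδ : δ < r / 2)
    (hequi : ∀ B : Set X,
      (1 - δ) * (lam ((nbhd δ Bᶜ)ᶜ)).toReal ≤ (Nat.card {j : J // x j ∈ B} : ℝ) / C ∧
      (Nat.card {j : J // x j ∈ B} : ℝ) / C ≤ (1 + δ) * (lam (nbhd δ B)).toReal)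
    (hexp : ∀ (A : Set X) (η : ℝ), 0 < η → (lam (nbhd η A)).toReal ≤ 1 / 2 →
      (1 + η / R) * (lam A).toReal ≤ (lam (nbhd η A)).toReal)
    (harith : 1 / (1 + (r / 2 - δ) * (1 / R)) ≤ (1 - δ) / (1 + δ))
    (ρ : X → X) (hρ : Isometry ρ) (hρbij : Function.Bijective ρ)
    (hρmp : Measure.map ρ lam = lam) :
    ∀ B : Set X,
      (Nat.card {j : J // x j ∈ B} : ℝ) ≤ (Nat.card {j : J // x j ∈ ρ '' nbhd r B} : ℝ) := by
  intro B
  let e : X ≃ᵢ X := ⟨Equiv.ofBijective ρ hρbij, hρ⟩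
  have hm : ∀ S, lam (ρ ⁻¹' S) = lam S := by
    intro S
    have h := e.toHomeomorph.toMeasurableEquiv.map_apply (μ := lam) S
    have h' : Measure.map ρ lam S = lam (ρ ⁻¹' S) := h
    rw [← h', hρmp]
  have himg : ∀ S : Set X, e.symm ⁻¹' S = ρ '' S := fun S => congrFun e.preimage_symm S
  have hm' : ∀ S, lam (e.symm ⁻¹' S) = lam S := by
    intro S
    rw [himg, ← hm, Set.preimage_image_eq _ hρbij.1]
  by_cases hB : (lam (nbhd (r / 2) B)).toReal ≤ 1 / 2
  · have := case_small lam x C R r δ hC hR hδ0 hδ hequi hexp harith e.symm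
      e.symm.isometry hm' B hB
    rwa [himg] at this
  · push Not at hB
    have hopen : MeasurableSet (nbhd (r / 2) B) :=
      (isOpen_biUnion fun _ _ => Metric.isOpen_ball).measurableSet
    have hsub : ρ ⁻¹' nbhd (r / 2) (ρ '' nbhd r B)ᶜ ⊆ (nbhd (r / 2) B)ᶜ := by
      intro y hy hy'
      obtain ⟨b, hb, hyb⟩ := mem_nbhd_iff.1 hy'
      obtain ⟨a, ha, hya⟩ := mem_nbhd_iff.1 (show ρ y ∈ nbhd _ _ from hy)
      obtain ⟨c, rfl⟩ := hρbij.2 a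
      rw [hρ.dist_eq] at hya
      exact ha ⟨c, mem_nbhd_iff.2 ⟨b, hb, by
        linarith [dist_triangle c y b, dist_comm c y]⟩, rfl⟩
    have hD : (lam (nbhd (r / 2) (ρ '' nbhd r B)ᶜ)).toReal ≤ 1 / 2 := by
      rw [← hm]
      have h1 : (lam (ρ ⁻¹' nbhd (r / 2) (ρ '' nbhd r B)ᶜ)).toReal
          ≤ (lam (nbhd (r / 2) B)ᶜ).toReal :=
        ENNReal.toReal_mono (measure_ne_top _ _) (measure_mono hsub)
      have h2 : (lam (nbhd (r / 2) B)ᶜ).toReal = 1 - (lam (nbhd (r / 2) B)).toReal :=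
        probReal_compl_eq_one_sub hopen
      linarith
    have h := case_small lam x C R r δ hC hR hδ0 hδ hequi hexp harith ρ hρ hm _ hD
    have hsub2 : ρ ⁻¹' nbhd r (ρ '' nbhd r B)ᶜ ⊆ Bᶜ := by
      intro y hy hyB
      obtain ⟨a, ha, hya⟩ := mem_nbhd_iff.1 (show ρ y ∈ nbhd _ _ from hy)
      obtain ⟨c, rfl⟩ := hρbij.2 a
      rw [hρ.dist_eq] at hya
      exact ha ⟨c, mem_nbhd_iff.2 ⟨y, hyB, by rwa [dist_comm]⟩, rfl⟩
    have h3 := card_mono_aux x hsub2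
    have h4 := card_compl_aux x B
    have h5 := card_compl_aux x (ρ '' nbhd r B)
    linarith
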